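/- arXiv:2110.11675 — 2 statements merged into one kernel-verified Lean document; each statement's English description precedes it below -/
import Mathlib

section
/- Let φ_1, …, φ_N be contractive similitudes on ℝ^d, let C = C_1 ∪ ⋯ ∪ C_m (m ≥ 2) be a union of pairwise disjoint arcs, and let K be the attractor of the IFS with condensation {C; φ_1, …, φ_N}. Assume: K is an arc with a homeomorphism h : [0,1] → K; K decomposes as γ_1 + ⋯ + γ_{m+N}, where γ_1, …, γ_{m+N} is a rearrangement of C_1, …, C_m, φ_1(K), …, φ_N(K) with γ_1 and γ_{m+N} in {C_1, …, C_m}; the attractor E of {φ_1, …, φ_N} satisfies s := dim_H E > 1 and the s-dimensional Hausdorff measure of E is finite, H^s(E) < ∞. Define f : K → ℝ by f(z) = H^s(h([0, h^{−1}(z)]) ∩ E). Then for every ε > 0 there exists δ > 0 such that for all z_1, z_2 ∈ K with 0 < |z_1 − z_2| < δ, one has |f(z_1) − f(z_2)| ≤ ε |z_1 − z_2|. -/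
open Set MeasureTheory

noncomputable section

/-!
The points of `E` sit in the copies `φ i (K)`, and even in the relative interior of the
corresponding subarcs, because the arc `K` begins and ends with a condensation piece. By a Lebesgue
number argument a sufficiently short subarc of `K` therefore either misses `E` or lies inside a
single copy `φ i (K)`, where pulling back by `φ i` magnifies it by `1 / ρ i`. Iterating until the
subarc has definite size, the scaling of `H^s` gives `H^s(subarc ∩ E) ≤ L * |z₁ - z₂| ^ s`, which is
`o(|z₁ - z₂|)` since `s > 1`.
-/

section Preliminaries

lemma continuousOn_invFunOn_image {X Y : Type*} [TopologicalSpace X] [Nonempty X]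
    [TopologicalSpace Y] [T2Space Y] {f : X → Y} {S : Set X} (hS : IsCompact S)
    (hf : ContinuousOn f S) (hinj : InjOn f S) :
    ContinuousOn (Function.invFunOn f S) (f '' S) := by
  refine continuousOn_iff_isClosed.2 fun F hF => ⟨f '' (S ∩ F), ?_, ?_⟩
  · exact ((hS.inter_right hF).image_of_continuousOn (hf.mono inter_subset_left)).isClosed
  · rw [inter_comm S F, hinj.leftInvOn_invFunOn.image_inter', inter_assoc, inter_self]

lemma exists_pos_forall_dist_lt_of_injOn {X Y : Type*} [PseudoMetricSpace X] [MetricSpace Y]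
    {f : X → Y} {S : Set X} (hS : IsCompact S) (hf : ContinuousOn f S) (hinj : InjOn f S)
    {η : ℝ} (hη : 0 < η) :
    ∃ c > 0, ∀ u ∈ S, ∀ v ∈ S, dist (f u) (f v) < c → dist u v < η := by
  rcases S.eq_empty_or_nonempty with rfl | ⟨x, -⟩
  · exact ⟨1, one_pos, by simp⟩
  have : Nonempty X := ⟨x⟩
  obtain ⟨c, hc, hclose⟩ := Metric.uniformContinuousOn_iff.1
    ((hS.image_of_continuousOn hf).uniformContinuousOn_of_continuous
      (continuousOn_invFunOn_image hS hf hinj)) η hη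
  refine ⟨c, hc, fun u hu v hv huv => ?_⟩
  simpa only [hinj.leftInvOn_invFunOn hu, hinj.leftInvOn_invFunOn hv] using
    hclose _ (mem_image_of_mem f hu) _ (mem_image_of_mem f hv) huv

lemma exists_pos_forall_disjoint_uIcc_or_subset {ι : Sort*} {F : Set ℝ} (hF : IsCompact F)
    {U : ι → Set ℝ} (hU : ∀ i, IsOpen (U i)) (hFU : F ⊆ ⋃ i, U i) :
    ∃ η > 0, ∀ u v, dist u v < η → Disjoint (uIcc u v) F ∨ ∃ i, uIcc u v ⊆ U i := by
  obtain ⟨η, hη, hball⟩ := lebesgue_number_lemma_of_metric hF hU hFU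
  refine ⟨η, hη, fun u v huv => or_iff_not_imp_left.2 fun hmeet => ?_⟩
  obtain ⟨x, hx, hxF⟩ := not_disjoint_iff.1 hmeet
  obtain ⟨i, hi⟩ := hball x hxF
  exact ⟨i, fun y hy => hi ((Real.dist_le_of_mem_uIcc hy hx).trans_lt huv)⟩

lemma mapsTo_Ioo_of_injOn_Icc {α β : Type*} [ConditionallyCompleteLinearOrder α]
    [TopologicalSpace α] [OrderTopology α] [DenselyOrdered α] [LinearOrder β] [TopologicalSpace β]
    [OrderClosedTopology β] {g : α → β} {x y : α} {a b : β} (hcont : ContinuousOn g (Icc x y))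
    (hinj : InjOn g (Icc x y)) (hmaps : MapsTo g (Icc x y) (Icc a b)) :
    MapsTo g (Ioo x y) (Ioo a b) := by
  intro v hv
  have hxy : x ≤ y := (hv.1.trans hv.2).le
  have hx := hmaps (left_mem_Icc.2 hxy)
  have hy := hmaps (right_mem_Icc.2 hxy)
  rcases hcont.strictMonoOn_of_injOn_Icc' hxy hinj with hmono | hanti
  · exact Ioo_subset_Ioo hx.1 hy.2 (hmono.mapsTo_Ioo hv)
  · exact Ioo_subset_Ioo hy.1 hx.2 (hanti.mapsTo_Ioo hv)

lemma abs_measureReal_sub_le_of_subset_union {α : Type*} [MeasurableSpace α] {μ : Measure α}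
    {A B D : Set α} (hAB : A ⊆ B ∪ D) (hBA : B ⊆ A ∪ D) (hA : μ A ≠ ⊤) (hB : μ B ≠ ⊤)
    (hD : μ D ≠ ⊤) : |μ.real A - μ.real B| ≤ μ.real D := by
  have hle_A := (measureReal_mono hAB (measure_union_ne_top hB hD)).trans (measureReal_union_le B D)
  have hle_B := (measureReal_mono hBA (measure_union_ne_top hA hD)).trans (measureReal_union_le A D)
  exact abs_sub_le_iff.2 ⟨by linarith, by linarith⟩

lemma abs_measureReal_image_Icc_inter_sub_le {α X : Type*} [LinearOrder α] [MeasurableSpace X]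
    {μ : Measure X} (h : α → X) {E : Set X} (hfin : μ E ≠ ⊤) (x u v : α) :
    |μ.real (h '' Icc x u ∩ E) - μ.real (h '' Icc x v ∩ E)| ≤ μ.real (h '' uIcc u v ∩ E) := by
  have hfin_inter : ∀ A : Set X, μ (A ∩ E) ≠ ⊤ := fun A =>
    measure_ne_top_of_subset inter_subset_right hfin
  have hcover : ∀ p q : α, h '' Icc x p ∩ E ⊆ h '' Icc x q ∩ E ∪ h '' uIcc p q ∩ E := by
    intro p q
    rw [← union_inter_distrib_right, ← image_union]
    refine inter_subset_inter_left E (image_mono fun y hy => ?_)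
    rcases le_total y q with hyq | hqy
    · exact Or.inl ⟨hy.1, hyq⟩
    · exact Or.inr (mem_uIcc.2 (Or.inr ⟨hqy, hy.2⟩))
  exact abs_measureReal_sub_le_of_subset_union (hcover u v) (uIcc_comm u v ▸ hcover v u)
    (hfin_inter _) (hfin_inter _) (hfin_inter _)

lemma exists_pos_forall_mul_rpow_le_mul (L : ℝ) {s ε : ℝ} (hs : 1 < s) (hε : 0 < ε) :
    ∃ δ > 0, ∀ x, 0 < x → x < δ → L * x ^ s ≤ ε * x := by
  have hcont : ContinuousAt (fun x : ℝ => L * x ^ (s - 1)) 0 :=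
    (Real.continuousAt_rpow_const 0 (s - 1) (Or.inr (sub_pos.2 hs).le)).const_mul L
  have hzero : L * (0 : ℝ) ^ (s - 1) < ε := by
    rwa [Real.zero_rpow (sub_pos.2 hs).ne', mul_zero]
  obtain ⟨δ, hδ, hlt⟩ := Metric.eventually_nhds_iff.1 (hcont.eventually (gt_mem_nhds hzero))
  refine ⟨δ, hδ, fun x hx hxδ => ?_⟩
  have hxε : L * x ^ (s - 1) ≤ ε := (hlt (by rwa [Real.dist_0_eq_abs, abs_of_pos hx])).le
  calc L * x ^ s = L * x ^ (s - 1) * x := by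
        rw [mul_assoc, Real.rpow_sub_one hx.ne', div_mul_cancel₀ _ hx.ne']
    _ ≤ ε * x := by gcongr

end Preliminaries

section Similitudes

variable {X Y : Type*} {r : ℝ} {f : X → Y}

lemma lipschitzWith_of_dist_eq_mul [PseudoMetricSpace X] [PseudoMetricSpace Y] (hr : 0 ≤ r)
    (hf : ∀ x y, dist (f x) (f y) = r * dist x y) : LipschitzWith r.toNNReal f :=
  LipschitzWith.of_dist_le_mul fun x y => by rw [hf, Real.coe_toNNReal r hr]

lemma injective_of_dist_eq_mul [MetricSpace X] [PseudoMetricSpace Y] (hr : 0 < r)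
    (hf : ∀ x y, dist (f x) (f y) = r * dist x y) : Function.Injective f := by
  intro x y hxy
  have hzero : r * dist x y = 0 := by rw [← hf, hxy, dist_self]
  exact dist_eq_zero.1 ((mul_eq_zero_iff_left hr.ne').1 hzero)

lemma edist_eq_ofReal_mul_of_dist_eq_mul [PseudoMetricSpace X] [PseudoMetricSpace Y] (hr : 0 ≤ r)
    (hf : ∀ x y, dist (f x) (f y) = r * dist x y) (x y : X) :
    edist (f x) (f y) = ENNReal.ofReal r * edist x y := by
  rw [edist_dist, edist_dist, hf, ENNReal.ofReal_mul hr]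

end Similitudes

section Attractors

lemma infDist_apply_le_mul_infDist {X : Type*} [PseudoMetricSpace X] {K : Set X} {r : NNReal}
    {f : X → X} (hf : LipschitzWith r f) (hK : MapsTo f K K) (x : X) :
    Metric.infDist (f x) K ≤ r * Metric.infDist x K := by
  rcases K.eq_empty_or_nonempty with rfl | hne
  · simp only [Metric.infDist_empty, mul_zero, le_refl]
  have : Nonempty K := hne.to_subtype
  rw [Metric.infDist_eq_iInf (x := x), Real.mul_iInf_of_nonneg r.coe_nonneg]
  exact le_ciInf fun k =>
    (Metric.infDist_le_dist_of_mem (hK k.2)).trans (hf.dist_le_mul x k)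

/- Maximum principle: the point of `E` farthest from `K` is the image of a point of `E` that is
strictly farther away, unless the distance is zero. -/
lemma subset_of_subset_iUnion_image_of_contracting {X ι : Type*} [MetricSpace X] {φ : ι → X → X}
    (hφ : ∀ i, ∃ r, ContractingWith r (φ i)) {K E : Set X} (hKne : K.Nonempty) (hK : IsClosed K)
    (hφK : ∀ i, MapsTo (φ i) K K) (hEc : IsCompact E) (hE : E ⊆ ⋃ i, φ i '' E) : E ⊆ K := by
  rcases E.eq_empty_or_nonempty with rfl | hEne
  · exact empty_subset K
  obtain ⟨x, hx, hmax⟩ := hEc.exists_isMaxOn hEne (Metric.continuous_infDist_pt K).continuousOn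
  obtain ⟨i, y, hy, rfl⟩ := mem_iUnion.1 (hE hx)
  obtain ⟨r, hr, hlip⟩ := hφ i
  have hcontract := infDist_apply_le_mul_infDist hlip (hφK i) y
  have hmax_y : Metric.infDist y K ≤ Metric.infDist (φ i y) K := hmax hy
  have hr' : (r : ℝ) < 1 := hr
  have hmax_zero : Metric.infDist (φ i y) K ≤ 0 := by
    by_contra! hpos
    exact (mul_lt_of_lt_one_left hpos hr').not_ge
      (hcontract.trans (mul_le_mul_of_nonneg_left hmax_y r.coe_nonneg))
  intro z hz
  rw [hK.mem_iff_infDist_zero hKne]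
  exact le_antisymm ((hmax hz).trans hmax_zero) Metric.infDist_nonneg

end Attractors

/-- The arc `K = h [0, 1]` contains its copies `φ i (K)` as the subarcs `h [a i, b i]`, which do not
overlap and stay away from the two endpoints. The condensation set, being the rest of the arc, is
not recorded. -/
structure HasInteriorCopies {X ι : Type*} [TopologicalSpace X] (h : ℝ → X) (φ : ι → X → X)
    (a b : ι → ℝ) : Prop where
  continuousOn : ContinuousOn h (Icc 0 1)
  injOn : InjOn h (Icc 0 1)
  left_pos : ∀ i, 0 < a i
  right_lt_one : ∀ i, b i < 1
  image_Icc : ∀ i, h '' Icc (a i) (b i) = φ i '' (h '' Icc 0 1)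
  pairwise_disjoint : Pairwise (Function.onFun Disjoint fun i => Ioo (a i) (b i))

/-- Renormalization of short subarcs: if the endpoints of a subarc of `h [0, 1]` are less than `c`
apart, it either misses `E` or has a model subarc that some `φ i` carries onto it, as far as its
endpoints and the points of `E` on it are concerned. -/
def RenormalizesBelow {X ι : Type*} [Dist X] (h : ℝ → X) (φ : ι → X → X) (E : Set X) (c : ℝ) :
    Prop :=
  ∀ u ∈ Icc (0 : ℝ) 1, ∀ v ∈ Icc (0 : ℝ) 1, dist (h u) (h v) < c →
    Disjoint (h '' uIcc u v) E ∨
    ∃ i, ∃ u' ∈ Icc (0 : ℝ) 1, ∃ v' ∈ Icc (0 : ℝ) 1, h u = φ i (h u') ∧ h v = φ i (h v') ∧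
      h '' uIcc u v ∩ E ⊆ φ i '' (h '' uIcc u' v' ∩ E)

section Partition

lemma pairwise_disjoint_Ioo_castSucc_succ {n : ℕ} {α : Type*} [Preorder α] {t : Fin (n + 1) → α}
    (ht : Monotone t) :
    Pairwise (Function.onFun Disjoint fun ℓ : Fin n => Ioo (t ℓ.castSucc) (t ℓ.succ)) := by
  intro k ℓ hkℓ
  simpa only [Function.onFun, Fin.orderSucc_castSucc] using
    ht.pairwise_disjoint_on_Ioo_succ ((Fin.castSucc_injective n).ne hkℓ)

lemma hasInteriorCopies_of_partition {X ι κ : Type*} [TopologicalSpace X] {h : ℝ → X}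
    {φ : ι → X → X} {C : κ → Set X} {n : ℕ} (hn : 0 < n) (hcont : ContinuousOn h (Icc 0 1))
    (hinj : InjOn h (Icc 0 1)) {t : Fin (n + 1) → ℝ} (ht0 : t 0 = 0) (htlast : t (Fin.last n) = 1)
    (ht : StrictMono t) (σ : Fin n ≃ κ ⊕ ι)
    (hdecomp : ∀ ℓ : Fin n, h '' Icc (t ℓ.castSucc) (t ℓ.succ) =
      Sum.elim C (fun i => φ i '' (h '' Icc 0 1)) (σ ℓ))
    (hfirst : (σ ⟨0, hn⟩).isLeft = true)
    (hlast : (σ ⟨n - 1, Nat.sub_one_lt_of_lt hn⟩).isLeft = true) :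
    HasInteriorCopies h φ (fun i => t (σ.symm (Sum.inr i)).castSucc)
      (fun i => t (σ.symm (Sum.inr i)).succ) where
  continuousOn := hcont
  injOn := hinj
  left_pos i := by
    have hne : σ.symm (Sum.inr i) ≠ ⟨0, hn⟩ := fun heq => by simp [← heq] at hfirst
    rw [← ht0]
    exact ht (Fin.lt_def.2 (Nat.pos_of_ne_zero (Fin.val_ne_iff.2 hne)))
  right_lt_one i := by
    have hne : σ.symm (Sum.inr i) ≠ ⟨n - 1, Nat.sub_one_lt_of_lt hn⟩ :=
      fun heq => by simp [← heq] at hlast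
    rw [← htlast]
    have hval : (σ.symm (Sum.inr i)).val ≠ n - 1 := Fin.val_ne_iff.2 hne
    refine ht (Fin.lt_def.2 ?_)
    rw [Fin.val_succ, Fin.val_last]
    omega
  image_Icc i := by rw [hdecomp, σ.apply_symm_apply, Sum.elim_inr]
  pairwise_disjoint := (pairwise_disjoint_Ioo_castSucc_succ ht.monotone).comp_of_injective
    (σ.symm.injective.comp Sum.inr_injective)

end Partition

namespace HasInteriorCopies

section Topological

variable {X ι : Type*} [TopologicalSpace X] {h : ℝ → X} {φ : ι → X → X} {a b : ι → ℝ} {E : Set X}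

lemma Icc_subset_Icc_zero_one (hh : HasInteriorCopies h φ a b) (i : ι) :
    Icc (a i) (b i) ⊆ Icc 0 1 :=
  Icc_subset_Icc (hh.left_pos i).le (hh.right_lt_one i).le

lemma mapsTo_image_Icc (hh : HasInteriorCopies h φ a b) (i : ι) :
    MapsTo (φ i) (h '' Icc 0 1) (h '' Icc 0 1) :=
  mapsTo_iff_image_subset.2 <| hh.image_Icc i ▸ image_mono (hh.Icc_subset_Icc_zero_one i)

lemma subset_image_Ioo (hh : HasInteriorCopies h φ a b) (hEK : E ⊆ h '' Icc 0 1)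
    (hE : E ⊆ ⋃ i, φ i '' E) : E ⊆ h '' Ioo 0 1 := by
  intro x hx
  obtain ⟨i, hi⟩ := mem_iUnion.1 (hE hx)
  obtain ⟨w, hw, rfl⟩ := (hh.image_Icc i).superset (image_mono hEK hi)
  exact mem_image_of_mem h ⟨(hh.left_pos i).trans_le hw.1, hw.2.trans_lt (hh.right_lt_one i)⟩

variable [T2Space X]

lemma exists_conjugate (hh : HasInteriorCopies h φ a b) {i : ι} (hφc : Continuous (φ i))
    (hφi : Function.Injective (φ i)) :
    ∃ g : ℝ → ℝ, ContinuousOn g (Icc 0 1) ∧ InjOn g (Icc 0 1) ∧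
      g '' Icc 0 1 = Icc (a i) (b i) ∧ EqOn (h ∘ g) (φ i ∘ h) (Icc 0 1) := by
  let param : X → ℝ := Function.invFunOn h (Icc 0 1)
  have hparam : LeftInvOn param h (Icc 0 1) := hh.injOn.leftInvOn_invFunOn
  have hparam' : RightInvOn param h (h '' Icc 0 1) := (surjOn_image h _).rightInvOn_invFunOn
  have hmaps : MapsTo (φ i ∘ h) (Icc 0 1) (h '' Icc 0 1) :=
    (hh.mapsTo_image_Icc i).comp (mapsTo_image h _)
  have hconj : EqOn (h ∘ param ∘ φ i ∘ h) (φ i ∘ h) (Icc 0 1) := fun v hv => hparam' (hmaps hv)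
  refine ⟨param ∘ φ i ∘ h, ?_, ?_, ?_, hconj⟩
  · exact (continuousOn_invFunOn_image isCompact_Icc hh.continuousOn hh.injOn).comp
      (hφc.comp_continuousOn hh.continuousOn) hmaps
  · exact InjOn.of_comp (g := h) (hconj.injOn_iff.2 (hφi.comp_injOn hh.injOn))
  · rw [image_comp, image_comp, ← hh.image_Icc,
      (hparam.mono (hh.Icc_subset_Icc_zero_one i)).image_image]

lemma mem_Ioo_of_mem_image (hh : HasInteriorCopies h φ a b) {i : ι} (hφc : Continuous (φ i))
    (hφi : Function.Injective (φ i)) {x : ℝ} (hx : x ∈ Icc 0 1)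
    (hx' : h x ∈ φ i '' (h '' Ioo 0 1)) : x ∈ Ioo (a i) (b i) := by
  obtain ⟨g, hgc, hgi, hgimage, hconj⟩ := hh.exists_conjugate hφc hφi
  obtain ⟨_, ⟨w, hw, rfl⟩, hwx⟩ := hx'
  have hw' := Ioo_subset_Icc_self hw
  have hgmaps : MapsTo g (Icc 0 1) (Icc (a i) (b i)) := mapsTo_iff_image_subset.2 hgimage.subset
  have hgw : g w = x := hh.injOn (hh.Icc_subset_Icc_zero_one i (hgmaps hw')) hx
    ((hconj hw').trans hwx)
  exact hgw ▸ mapsTo_Ioo_of_injOn_Icc hgc hgi hgmaps hw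

lemma exists_mem_Ioo_and_mem_image (hh : HasInteriorCopies h φ a b)
    (hφc : ∀ i, Continuous (φ i)) (hφi : ∀ i, Function.Injective (φ i))
    (hEK : E ⊆ h '' Icc 0 1) (hE : E ⊆ ⋃ i, φ i '' E) {x : ℝ} (hx : x ∈ Icc 0 1)
    (hxE : h x ∈ E) : ∃ i, x ∈ Ioo (a i) (b i) ∧ h x ∈ φ i '' E := by
  obtain ⟨i, hi⟩ := mem_iUnion.1 (hE hxE)
  exact ⟨i, hh.mem_Ioo_of_mem_image (hφc i) (hφi i) hx
    (image_mono (hh.subset_image_Ioo hEK hE) hi), hi⟩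

lemma image_Ioo_inter_subset (hh : HasInteriorCopies h φ a b)
    (hφc : ∀ i, Continuous (φ i)) (hφi : ∀ i, Function.Injective (φ i))
    (hEK : E ⊆ h '' Icc 0 1) (hE : E ⊆ ⋃ i, φ i '' E) (i : ι) :
    h '' Ioo (a i) (b i) ∩ E ⊆ φ i '' E := by
  rintro _ ⟨⟨x, hx, rfl⟩, hxE⟩
  obtain ⟨j, hxj, hj⟩ := hh.exists_mem_Ioo_and_mem_image hφc hφi hEK hE
    (hh.Icc_subset_Icc_zero_one i (Ioo_subset_Icc_self hx)) hxE
  have hij : i = j := hh.pairwise_disjoint.eq (not_disjoint_iff.2 ⟨x, hx, hxj⟩)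
  rwa [hij]

lemma exists_preimage_subarc (hh : HasInteriorCopies h φ a b) {i : ι} (hφc : Continuous (φ i))
    (hφi : Function.Injective (φ i)) (hEi : h '' Ioo (a i) (b i) ∩ E ⊆ φ i '' E) {u v : ℝ}
    (huv : uIcc u v ⊆ Ioo (a i) (b i)) :
    ∃ u' ∈ Icc (0 : ℝ) 1, ∃ v' ∈ Icc (0 : ℝ) 1, h u = φ i (h u') ∧ h v = φ i (h v') ∧
      h '' uIcc u v ∩ E ⊆ φ i '' (h '' uIcc u' v' ∩ E) := by
  obtain ⟨g, hgc, -, hgimage, hconj⟩ := hh.exists_conjugate hφc hφi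
  have hsurj : SurjOn g (Icc 0 1) (Ioo (a i) (b i)) := hgimage.superset.trans' Ioo_subset_Icc_self
  obtain ⟨u', hu', rfl⟩ := hsurj (huv left_mem_uIcc)
  obtain ⟨v', hv', rfl⟩ := hsurj (huv right_mem_uIcc)
  have hsub : uIcc u' v' ⊆ Icc 0 1 := ordConnected_Icc.uIcc_subset hu' hv'
  refine ⟨u', hu', v', hv', hconj hu', hconj hv', ?_⟩
  rintro _ ⟨⟨x, hx, rfl⟩, hxE⟩
  obtain ⟨w, hw, rfl⟩ := intermediate_value_uIcc (hgc.mono hsub) hx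
  have hgw : h (g w) = φ i (h w) := hconj (hsub hw)
  have hwE : h w ∈ E := (hφi.mem_set_image).1 (hgw ▸ hEi ⟨mem_image_of_mem h (huv hx), hxE⟩)
  exact ⟨h w, ⟨mem_image_of_mem h hw, hwE⟩, hgw.symm⟩

end Topological

lemma exists_renormalizesBelow {X ι : Type*} [MetricSpace X] {h : ℝ → X} {φ : ι → X → X}
    {a b : ι → ℝ} {E : Set X} (hh : HasInteriorCopies h φ a b) (hφc : ∀ i, Continuous (φ i))
    (hφi : ∀ i, Function.Injective (φ i)) (hEc : IsClosed E) (hEK : E ⊆ h '' Icc 0 1)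
    (hE : E ⊆ ⋃ i, φ i '' E) : ∃ c > 0, RenormalizesBelow h φ E c := by
  have hparam : IsCompact (Icc 0 1 ∩ h ⁻¹' E) := isCompact_Icc.of_isClosed_subset
    (hh.continuousOn.preimage_isClosed_of_isClosed isClosed_Icc hEc) inter_subset_left
  obtain ⟨η, hη, hshort⟩ := exists_pos_forall_disjoint_uIcc_or_subset hparam
    (U := fun i => Ioo (a i) (b i)) (fun _ => isOpen_Ioo) fun x hx => mem_iUnion.2 <|
      (hh.exists_mem_Ioo_and_mem_image hφc hφi hEK hE hx.1 hx.2).imp fun _ => And.left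
  obtain ⟨c, hc, hclose⟩ :=
    exists_pos_forall_dist_lt_of_injOn isCompact_Icc hh.continuousOn hh.injOn hη
  refine ⟨c, hc, fun u hu v hv huv => (hshort u v (hclose u hu v hv huv)).imp ?_ ?_⟩
  · intro hdisj
    have hsub : uIcc u v ⊆ Icc 0 1 := ordConnected_Icc.uIcc_subset hu hv
    refine disjoint_left.2 ?_
    rintro _ ⟨x, hx, rfl⟩ hxE
    exact disjoint_left.1 hdisj hx ⟨hsub hx, hxE⟩
  · rintro ⟨i, hi⟩
    exact ⟨i, hh.exists_preimage_subarc (hφc i) (hφi i)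
      (hh.image_Ioo_inter_subset hφc hφi hEK hE i) hi⟩

end HasInteriorCopies

section HausdorffMeasure

variable {X : Type*} [MetricSpace X] [MeasurableSpace X] [BorelSpace X] {E : Set X} {s c : ℝ}

lemma hausdorffMeasure_inter_le_of_le_dist (hc : 0 < c) (hs : 0 ≤ s) (A : Set X) {x y : X}
    (hxy : c ≤ dist x y) :
    μH[s] (A ∩ E) ≤ μH[s] E / ENNReal.ofReal c ^ s * edist x y ^ s := by
  have hc0 : ENNReal.ofReal c ^ s ≠ 0 :=
    (ENNReal.rpow_pos (ENNReal.ofReal_pos.2 hc) ENNReal.ofReal_ne_top).ne'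
  have hctop : ENNReal.ofReal c ^ s ≠ ⊤ := ENNReal.rpow_ne_top_of_nonneg hs ENNReal.ofReal_ne_top
  have hle : ENNReal.ofReal c ≤ edist x y := edist_dist x y ▸ ENNReal.ofReal_le_ofReal hxy
  calc μH[s] (A ∩ E) ≤ μH[s] E := measure_mono inter_subset_right
    _ = μH[s] E / ENNReal.ofReal c ^ s * ENNReal.ofReal c ^ s :=
        (ENNReal.div_mul_cancel hc0 hctop).symm
    _ ≤ μH[s] E / ENNReal.ofReal c ^ s * edist x y ^ s := by gcongr

variable {ι : Type*} {h : ℝ → X} {φ : ι → X → X} {ρ : ι → ℝ}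

lemma RenormalizesBelow.hausdorffMeasure_le_of_pow_le (hren : RenormalizesBelow h φ E c)
    (hc : 0 < c) (hs : 0 ≤ s) (hρ : ∀ i, 0 < ρ i)
    (hsim : ∀ i x y, dist (φ i x) (φ i y) = ρ i * dist x y) {r : ℝ} (hr : 0 < r)
    (hρr : ∀ i, ρ i ≤ r) (n : ℕ) : ∀ u ∈ Icc (0 : ℝ) 1, ∀ v ∈ Icc (0 : ℝ) 1,
      c * r ^ n ≤ dist (h u) (h v) →
      μH[s] (h '' uIcc u v ∩ E) ≤ μH[s] E / ENNReal.ofReal c ^ s * edist (h u) (h v) ^ s := by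
  induction n with
  | zero =>
    intro u _ v _ huv
    exact hausdorffMeasure_inter_le_of_le_dist hc hs _ (by simpa using huv)
  | succ n ih =>
    intro u hu v hv huv
    rcases le_or_gt c (dist (h u) (h v)) with hlarge | hsmall
    · exact hausdorffMeasure_inter_le_of_le_dist hc hs _ hlarge
    rcases hren u hu v hv hsmall with hdisj | ⟨i, u', hu', v', hv', hφu, hφv, hsub⟩
    · simp only [hdisj.inter_eq, measure_empty, zero_le]
    have hmagnified : c * r ^ n ≤ dist (h u') (h v') := by
      refine le_of_mul_le_mul_left ?_ hr
      calc r * (c * r ^ n) = c * r ^ (n + 1) := by ring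
        _ ≤ ρ i * dist (h u') (h v') := by rwa [← hsim, ← hφu, ← hφv]
        _ ≤ r * dist (h u') (h v') := by gcongr; exact hρr i
    have hlip := lipschitzWith_of_dist_eq_mul (hρ i).le (hsim i)
    set L := μH[s] E / ENNReal.ofReal c ^ s
    calc μH[s] (h '' uIcc u v ∩ E)
        ≤ ENNReal.ofReal (ρ i) ^ s * μH[s] (h '' uIcc u' v' ∩ E) :=
          (measure_mono hsub).trans (hlip.hausdorffMeasure_image_le hs _)
      _ ≤ ENNReal.ofReal (ρ i) ^ s * (L * edist (h u') (h v') ^ s) := by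
          gcongr; exact ih u' hu' v' hv' hmagnified
      _ = L * edist (h u) (h v) ^ s := by
          rw [hφu, hφv, edist_eq_ofReal_mul_of_dist_eq_mul (hρ i).le (hsim i),
            ENNReal.mul_rpow_of_nonneg _ _ hs, mul_left_comm]

lemma RenormalizesBelow.hausdorffMeasure_le [Finite ι] (hren : RenormalizesBelow h φ E c)
    (hc : 0 < c) (hs : 0 ≤ s) (hρ : ∀ i, ρ i ∈ Ioo 0 1)
    (hsim : ∀ i x y, dist (φ i x) (φ i y) = ρ i * dist x y) {u v : ℝ} (hu : u ∈ Icc 0 1)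
    (hv : v ∈ Icc 0 1) (huv : 0 < dist (h u) (h v)) :
    μH[s] (h '' uIcc u v ∩ E) ≤ μH[s] E / ENNReal.ofReal c ^ s * edist (h u) (h v) ^ s := by
  obtain ⟨r, ⟨hr0, hr1⟩, hρr⟩ := (Filter.Eventually.and (Ioo_mem_nhdsLT (zero_lt_one' ℝ))
    (Filter.eventually_all.2 fun i => Ioo_mem_nhdsLT (hρ i).2)).exists
  obtain ⟨n, hn⟩ := exists_pow_lt_of_lt_one (div_pos huv hc) hr1
  exact hren.hausdorffMeasure_le_of_pow_le hc hs (fun i => (hρ i).1) hsim hr0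
    (fun i => (hρr i).1.le) n u hu v hv ((lt_div_iff₀' hc).1 hn).le

lemma HasInteriorCopies.exists_abs_sub_le_mul_rpow [Finite ι] {a b : ι → ℝ}
    (hh : HasInteriorCopies h φ a b) (hρ : ∀ i, ρ i ∈ Ioo 0 1)
    (hsim : ∀ i x y, dist (φ i x) (φ i y) = ρ i * dist x y) (hEc : IsCompact E)
    (hE : E ⊆ ⋃ i, φ i '' E) (hs : 0 ≤ s) (hfin : μH[s] E ≠ ⊤) :
    ∃ L : ℝ, ∀ u ∈ Icc (0 : ℝ) 1, ∀ v ∈ Icc (0 : ℝ) 1, 0 < dist (h u) (h v) →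
      |(μH[s] (h '' Icc 0 u ∩ E)).toReal - (μH[s] (h '' Icc 0 v ∩ E)).toReal| ≤
        L * dist (h u) (h v) ^ s := by
  have hlip : ∀ i, LipschitzWith (ρ i).toNNReal (φ i) := fun i =>
    lipschitzWith_of_dist_eq_mul (hρ i).1.le (hsim i)
  have hEK : E ⊆ h '' Icc 0 1 := subset_of_subset_iUnion_image_of_contracting
    (fun i => ⟨_, Real.toNNReal_lt_one.2 (hρ i).2, hlip i⟩) ((nonempty_Icc.2 zero_le_one).image h)
    (isCompact_Icc.image_of_continuousOn hh.continuousOn).isClosed hh.mapsTo_image_Icc hEc hE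
  obtain ⟨c, hc, hren⟩ := hh.exists_renormalizesBelow (fun i => (hlip i).continuous)
    (fun i => injective_of_dist_eq_mul (hρ i).1 (hsim i)) hEc.isClosed hEK hE
  set L := μH[s] E / ENNReal.ofReal c ^ s
  have hL : L ≠ ⊤ := ENNReal.div_ne_top hfin
    (ENNReal.rpow_pos (ENNReal.ofReal_pos.2 hc) ENNReal.ofReal_ne_top).ne'
  refine ⟨L.toReal, fun u hu v hv huv => ?_⟩
  calc |(μH[s] (h '' Icc 0 u ∩ E)).toReal - (μH[s] (h '' Icc 0 v ∩ E)).toReal|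
      ≤ (μH[s] (h '' uIcc u v ∩ E)).toReal := abs_measureReal_image_Icc_inter_sub_le h hfin 0 u v
    _ ≤ (L * edist (h u) (h v) ^ s).toReal := ENNReal.toReal_mono
        (ENNReal.mul_ne_top hL (ENNReal.rpow_ne_top_of_nonneg hs (edist_ne_top _ _)))
        (hren.hausdorffMeasure_le hc hs hρ hsim hu hv huv)
    _ = L.toReal * dist (h u) (h v) ^ s := by
        rw [ENNReal.toReal_mul, ← ENNReal.toReal_rpow, ← dist_edist]

theorem key_estimate_of_whitney_construction_general [Finite ι] {a b : ι → ℝ}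
    (hh : HasInteriorCopies h φ a b) (hρ : ∀ i, ρ i ∈ Ioo 0 1)
    (hsim : ∀ i x y, dist (φ i x) (φ i y) = ρ i * dist x y) (hEc : IsCompact E)
    (hE : E ⊆ ⋃ i, φ i '' E) (hs : 1 < s) (hfin : μH[s] E ≠ ⊤) :
    ∀ ε > (0 : ℝ), ∃ δ > (0 : ℝ), ∀ t₁ ∈ Icc (0 : ℝ) 1, ∀ t₂ ∈ Icc (0 : ℝ) 1,
      0 < dist (h t₁) (h t₂) → dist (h t₁) (h t₂) < δ →
      |(μH[s] (h '' Icc 0 t₁ ∩ E)).toReal - (μH[s] (h '' Icc 0 t₂ ∩ E)).toReal|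
        ≤ ε * dist (h t₁) (h t₂) := by
  intro ε hε
  obtain ⟨L, hL⟩ :=
    hh.exists_abs_sub_le_mul_rpow hρ hsim hEc hE (zero_le_one.trans hs.le) hfin
  obtain ⟨δ, hδ, hsmall⟩ := exists_pos_forall_mul_rpow_le_mul L hs hε
  exact ⟨δ, hδ, fun t₁ ht₁ t₂ ht₂ hpos hlt =>
    (hL t₁ ht₁ t₂ ht₂ hpos).trans (hsmall _ hpos hlt)⟩

end HausdorffMeasure

/-- The key estimate in the proof of Theorem 1.2: with `K` an arc (parametrized by `h`)
which is the attractor of the IFS with condensation `{C_1 ∪ ⋯ ∪ C_m; φ_1, …, φ_N}` and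
decomposes as a rearrangement of the `C_j` and `φ_i(K)` starting and ending with
condensation pieces, and with `E` the attractor of `{φ_1, …, φ_N}` of Hausdorff
dimension `s > 1` and finite `H^s` measure, the function
`f(z) = H^s(h([0, h⁻¹ z]) ∩ E)` satisfies `|f z₁ - f z₂| = o(|z₁ - z₂|)` uniformly. -/
theorem key_estimate_of_whitney_construction
    (d N m : ℕ) (hm : 2 ≤ m)
    -- the contractive similitudes φ_1, …, φ_N
    (φ : Fin N → EuclideanSpace ℝ (Fin d) → EuclideanSpace ℝ (Fin d))
    (ρ : Fin N → ℝ) (hρ : ∀ i, ρ i ∈ Set.Ioo (0 : ℝ) 1)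
    (hsim : ∀ i x y, dist (φ i x) (φ i y) = ρ i * dist x y)
    -- the condensation set C = C_1 ∪ ⋯ ∪ C_m, a disjoint union of arcs
    (C : Fin m → Set (EuclideanSpace ℝ (Fin d)))
    (hCarc : ∀ j, ∃ g : ℝ → EuclideanSpace ℝ (Fin d), ContinuousOn g (Set.Icc 0 1) ∧
      Set.InjOn g (Set.Icc 0 1) ∧ g '' Set.Icc 0 1 = C j)
    (hCdisj : Pairwise fun j j' => Disjoint (C j) (C j'))
    -- K is the attractor of the IFS with condensation {C; φ_1, …, φ_N}
    (K : Set (EuclideanSpace ℝ (Fin d)))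
    (hKne : K.Nonempty) (hKcomp : IsCompact K)
    (hK : K = (⋃ j, C j) ∪ ⋃ i, φ i '' K)
    -- K is an arc, parametrized by h, decomposing as γ_1 + ⋯ + γ_{m+N},
    -- a rearrangement (via σ) of C_1, …, C_m, φ_1(K), …, φ_N(K)
    (h : ℝ → EuclideanSpace ℝ (Fin d))
    (hcont : ContinuousOn h (Set.Icc 0 1)) (hinj : Set.InjOn h (Set.Icc 0 1))
    (himg : h '' Set.Icc 0 1 = K)
    (t : Fin (m + N + 1) → ℝ) (ht0 : t 0 = 0) (htlast : t (Fin.last (m + N)) = 1)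
    (htmono : StrictMono t)
    (σ : Fin (m + N) ≃ (Fin m ⊕ Fin N))
    (hdecomp : ∀ ℓ : Fin (m + N),
      h '' Set.Icc (t ℓ.castSucc) (t ℓ.succ)
        = Sum.elim C (fun i => φ i '' K) (σ ℓ))
    (hfirst : (σ ⟨0, by omega⟩).isLeft = true)
    (hlast : (σ ⟨m + N - 1, by omega⟩).isLeft = true)
    -- E is the attractor of {φ_1, …, φ_N}, with s := dim_H E > 1 and H^s(E) < ∞
    (E : Set (EuclideanSpace ℝ (Fin d)))
    (hEne : E.Nonempty) (hEcomp : IsCompact E)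
    (hE : E = ⋃ i, φ i '' E)
    (s : ℝ) (hs : dimH E = ENNReal.ofReal s) (hs1 : 1 < s)
    (hfin : μH[s] E < ⊤) :
    -- the conclusion: with f (h t) = H^s(h([0,t]) ∩ E), one has
    -- |f z₁ - f z₂| ≤ ε |z₁ - z₂| whenever 0 < |z₁ - z₂| < δ
    ∀ ε > (0 : ℝ), ∃ δ > (0 : ℝ), ∀ t₁ ∈ Set.Icc (0 : ℝ) 1, ∀ t₂ ∈ Set.Icc (0 : ℝ) 1,
      0 < dist (h t₁) (h t₂) → dist (h t₁) (h t₂) < δ →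
      |(μH[s] (h '' Set.Icc 0 t₁ ∩ E)).toReal - (μH[s] (h '' Set.Icc 0 t₂ ∩ E)).toReal|
        ≤ ε * dist (h t₁) (h t₂) := by
  subst himg
  exact key_estimate_of_whitney_construction_general (hasInteriorCopies_of_partition (by omega)
    hcont hinj ht0 htlast htmono σ hdecomp hfirst hlast) hρ hsim hEcomp hE.subset hs1 hfin.ne
end
end

section
/- Let φ_1, …, φ_N be contractive similitudes on ℝ^d, let C ⊆ ℝ^d be a nonempty compact set whose connected components are C_1, …, C_m (each compact), and let K be the attractor of the IFS with condensation {C; φ_1, …, φ_N}. Form the graph whose vertices are the sets φ_1(K), …, φ_N(K), C_1, …, C_m, with an edge between two vertices U and V if and only if U ∩ V ≠ ∅. If this graph is connected (any two vertices are joined by a path), then K is connected. -/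
open Set

noncomputable section

/-!
Suppose that any two points of `K` are joined by a chain in `K` with steps at most `δ`. Then every
`φ i '' K` has the same property with steps `r * δ`, where `r < 1` bounds the ratios, and every
`C j` has it for all positive steps because it is connected. Chains concatenate along the edges of
the Hata graph, so `K` itself is chained with steps `max (r * δ) ε`, for any `ε > 0`. Starting from
`δ = diam K` and iterating, `K` is chained at every positive scale; a compact set with this property
is connected.
-/

open Filter Metric Relation Topology Uniformity
open scoped NNReal

variable {X Y ι κ : Type*}

/-- `s` is chain connected for the relation `V` if any two points of `s` are joined by a finite
chain of points of `s` whose consecutive members are related by `V`. In a metric space, chains with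
steps at most `ε` are those of the relation `{p | dist p.1 p.2 ≤ ε}`. -/
def IsChainConnected (V : SetRel X X) (s : Set X) : Prop :=
  ∀ x ∈ s, ∀ y ∈ s, ReflTransGen (fun a b => a ∈ s ∧ b ∈ s ∧ (a, b) ∈ V) x y

namespace IsChainConnected

theorem mono {V W : SetRel X X} {s : Set X} (hs : IsChainConnected V s) (hVW : V ⊆ W) :
    IsChainConnected W s := fun x hx y hy =>
  ReflTransGen.mono (fun _ _ h => ⟨h.1, h.2.1, hVW h.2.2⟩) x y (hs x hx y hy)

theorem image {V : SetRel X X} {W : SetRel Y Y} {s : Set X} {f : X → Y}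
    (hs : IsChainConnected V s)
    (hf : ∀ a ∈ s, ∀ b ∈ s, (a, b) ∈ V → (f a, f b) ∈ W) : IsChainConnected W (f '' s) := by
  rintro _ ⟨x, hx, rfl⟩ _ ⟨y, hy, rfl⟩
  exact ReflTransGen.lift f
    (fun a b ⟨ha, hb, hab⟩ => ⟨mem_image_of_mem f ha, mem_image_of_mem f hb, hf a ha b hb hab⟩)
    x y (hs x hx y hy)

theorem iUnion_of_reflTransGen {V : SetRel X X} {s : ι → Set X}
    (hs : ∀ i, IsChainConnected V (s i))
    (h : ∀ i j, ReflTransGen (fun i j => (s i ∩ s j).Nonempty) i j) :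
    IsChainConnected V (⋃ i, s i) := by
  have chain_in_piece (i : ι) {x y : X} (hx : x ∈ s i) (hy : y ∈ s i) :
      ReflTransGen (fun a b => a ∈ ⋃ i, s i ∧ b ∈ ⋃ i, s i ∧ (a, b) ∈ V) x y :=
    ReflTransGen.mono
      (fun _ _ ⟨ha, hb, hab⟩ => ⟨mem_iUnion_of_mem i ha, mem_iUnion_of_mem i hb, hab⟩)
      x y (hs i x hx y hy)
  intro x hx y hy
  obtain ⟨i, hxi⟩ := mem_iUnion.1 hx
  obtain ⟨j, hyj⟩ := mem_iUnion.1 hy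
  induction h i j generalizing y with
  | refl => exact chain_in_piece i hxi hyj
  | tail _ hjk ih =>
    obtain ⟨z, hzj, hzk⟩ := hjk
    exact (ih z (mem_iUnion_of_mem _ hzj) hzj).trans (chain_in_piece _ hzk hyj)

theorem of_isPreconnected [UniformSpace X] {V : SetRel X X} {s : Set X} (hs : IsPreconnected s)
    (hV : V ∈ 𝓤 X) : IsChainConnected V s := by
  intro x hx y hy
  refine hs.induction₂' (ReflTransGen fun a b => a ∈ s ∧ b ∈ s ∧ (a, b) ∈ V) (fun a ha => ?_)
    (fun _ _ _ _ _ _ => ReflTransGen.trans) hx hy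
  filter_upwards [self_mem_nhdsWithin, mem_nhdsWithin_of_mem_nhds (mem_nhds_left a hV),
    mem_nhdsWithin_of_mem_nhds (mem_nhds_right a hV)] with b hb hab hba
  exact ⟨.single ⟨ha, hb, hab⟩, .single ⟨hb, ha, hba⟩⟩

theorem isPreconnected_of_isCompact [UniformSpace X] {s : Set X} (hs : IsCompact s)
    (h : ∀ V ∈ 𝓤 X, IsChainConnected V s) : IsPreconnected s := by
  refine isPreconnected_of_forall_constant fun f hf x hx y hy => ?_
  have huc : ∀ᶠ p in 𝓤 X, p ∈ s ×ˢ s → f p.1 = f p.2 :=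
    eventually_inf_principal.1 <| (hs.uniformContinuousOn_of_continuous hf).eventually
      (DiscreteUniformity.relId_mem_uniformity Bool)
  induction h _ huc x hx y hy with
  | refl => rfl
  | tail _ hbc ih => exact (ih hbc.1).trans (hbc.2.2 ⟨hbc.1, hbc.2.1⟩)

end IsChainConnected

theorem exists_lipschitzWith_lt_one [Finite ι] [PseudoMetricSpace X] [PseudoMetricSpace Y]
    {f : ι → X → Y} {ρ : ι → ℝ} (hρ : ∀ i, ρ i < 1)
    (hf : ∀ i x y, dist (f i x) (f i y) ≤ ρ i * dist x y) :
    ∃ r : ℝ≥0, r < 1 ∧ ∀ i, LipschitzWith r (f i) := by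
  cases nonempty_fintype ι
  refine ⟨Finset.univ.sup fun i => (ρ i).toNNReal,
    (Finset.sup_lt_iff one_pos).2 fun i _ => Real.toNNReal_lt_one.2 (hρ i), fun i => ?_⟩
  exact (LipschitzWith.of_dist_le' (hf i)).weaken
    (Finset.le_sup (f := fun i => (ρ i).toNNReal) (Finset.mem_univ i))

section HataGraph

/-- The vertices of the Hata graph of the IFS with condensation `{⋃ j, C j; φ}`: the images
`φ i '' K` and the pieces `C j` of the condensation set. -/
def hataVertex (φ : ι → X → X) (C : κ → Set X) (K : Set X) : ι ⊕ κ → Set X :=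
  Sum.elim (fun i => φ i '' K) C

/-- The Hata graph of an IFS with condensation, whose edges join distinct intersecting vertices.
It is a graph on the index type `ι ⊕ κ`, so that equal sets with different indices are different
vertices. -/
def hataGraph (φ : ι → X → X) (C : κ → Set X) (K : Set X) : SimpleGraph (ι ⊕ κ) where
  Adj u v := u ≠ v ∧ (hataVertex φ C K u ∩ hataVertex φ C K v).Nonempty
  symm := ⟨fun _ _ h => ⟨h.1.symm, inter_comm _ _ ▸ h.2⟩⟩

variable {φ : ι → X → X} {C : κ → Set X} {K : Set X}

theorem iUnion_hataVertex :
    ⋃ v, hataVertex φ C K v = (⋃ j, C j) ∪ ⋃ i, φ i '' K := by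
  rw [hataVertex, iUnion_sumElim, union_comm]

variable [PseudoMetricSpace X] {r : ℝ≥0}

theorem IsChainConnected.of_hataGraph_preconnected (hφ : ∀ i, LipschitzOnWith r (φ i) K)
    (hC : ∀ j, IsPreconnected (C j)) (hK : K = (⋃ j, C j) ∪ ⋃ i, φ i '' K)
    (hG : (hataGraph φ C K).Preconnected) {δ ε : ℝ} (hε : 0 < ε) (hδε : r * δ ≤ ε)
    (hδ : IsChainConnected {p | dist p.1 p.2 ≤ δ} K) :
    IsChainConnected {p | dist p.1 p.2 ≤ ε} K := by
  have hvertex (v : ι ⊕ κ) : IsChainConnected {p | dist p.1 p.2 ≤ ε} (hataVertex φ C K v) := by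
    cases v with
    | inl i =>
      refine hδ.image fun a ha b hb hab => ?_
      calc dist (φ i a) (φ i b) ≤ r * dist a b := (hφ i).dist_le_mul a ha b hb
        _ ≤ r * δ := by gcongr; exact hab
        _ ≤ ε := hδε
    | inr j => exact .of_isPreconnected (hC j) (uniformity_basis_dist_le.mem_of_mem hε)
  rw [hK, ← iUnion_hataVertex]
  exact .iUnion_of_reflTransGen hvertex fun u v =>
    ReflTransGen.mono (fun _ _ h => h.2) u v
      ((SimpleGraph.reachable_iff_reflTransGen u v).1 (hG u v))

theorem IsChainConnected.of_hataGraph_preconnected_of_isBounded (hr : r < 1)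
    (hφ : ∀ i, LipschitzOnWith r (φ i) K) (hC : ∀ j, IsPreconnected (C j))
    (hKb : Bornology.IsBounded K) (hK : K = (⋃ j, C j) ∪ ⋃ i, φ i '' K)
    (hG : (hataGraph φ C K).Preconnected) {ε : ℝ} (hε : 0 < ε) :
    IsChainConnected {p | dist p.1 p.2 ≤ ε} K := by
  have chained (n : ℕ) :
      ∀ ε > 0, r ^ n * diam K ≤ ε → IsChainConnected {p | dist p.1 p.2 ≤ ε} K := by
    induction n with
    | zero =>
      intro ε _ hdiam x hx y hy
      rw [pow_zero, one_mul] at hdiam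
      exact .single ⟨hx, hy, (dist_le_diam_of_mem hKb hx hy).trans hdiam⟩
    | succ n ih =>
      intro ε hε hdiam
      refine .of_hataGraph_preconnected hφ hC hK hG hε (δ := max (r ^ n * diam K) ε) ?_
        (ih _ (lt_max_of_lt_right hε) (le_max_left _ _))
      rw [mul_max_of_nonneg _ _ r.coe_nonneg, ← mul_assoc, ← pow_succ']
      exact max_le hdiam (mul_le_of_le_one_left hε.le (mod_cast hr.le))
  have hlim : Tendsto (fun n : ℕ => (r : ℝ) ^ n * diam K) atTop (𝓝 0) := by
    simpa using
      (tendsto_pow_atTop_nhds_zero_of_lt_one r.coe_nonneg (mod_cast hr)).mul_const (diam K)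
  obtain ⟨n, hn⟩ := (hlim.eventually_le_const hε).exists
  exact chained n ε hε hn

theorem ifs_with_condensation_connected_of_hata_graph_connected_general (hr : r < 1)
    (hφ : ∀ i, LipschitzOnWith r (φ i) K) (hC : ∀ j, IsPreconnected (C j))
    (hKne : K.Nonempty) (hKc : IsCompact K) (hK : K = (⋃ j, C j) ∪ ⋃ i, φ i '' K)
    (hG : (hataGraph φ C K).Preconnected) : IsConnected K := by
  refine ⟨hKne, IsChainConnected.isPreconnected_of_isCompact hKc fun V hV => ?_⟩
  obtain ⟨ε, hε, hεV⟩ := uniformity_basis_dist_le.mem_iff.1 hV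
  exact (IsChainConnected.of_hataGraph_preconnected_of_isBounded hr hφ hC hKc.isBounded hK hG
    hε).mono hεV

end HataGraph

/-- If the Hata graph of an IFS with condensation (vertices `φ_1(K), …, φ_N(K),
C_1, …, C_m`; edges between distinct intersecting vertices) is connected, then the
attractor `K` is connected. -/
theorem ifs_with_condensation_connected_of_hata_graph_connected
    (d N m : ℕ)
    -- the contractive similitudes φ_1, …, φ_N
    (φ : Fin N → EuclideanSpace ℝ (Fin d) → EuclideanSpace ℝ (Fin d))
    (ρ : Fin N → ℝ) (hρ : ∀ i, ρ i ∈ Set.Ioo (0 : ℝ) 1)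
    (hsim : ∀ i x y, dist (φ i x) (φ i y) = ρ i * dist x y)
    -- C is nonempty compact with connected components C_1, …, C_m (each compact)
    (C : Fin m → Set (EuclideanSpace ℝ (Fin d)))
    (hCcomp : ∀ j, IsCompact (C j)) (hCconn : ∀ j, IsConnected (C j))
    (hCdisj : Pairwise fun j j' => Disjoint (C j) (C j'))
    -- K is the attractor of the IFS with condensation {C; φ_1, …, φ_N}
    (K : Set (EuclideanSpace ℝ (Fin d)))
    (hKne : K.Nonempty) (hKcomp : IsCompact K)
    (hK : K = (⋃ j, C j) ∪ ⋃ i, φ i '' K)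
    -- the Hata graph
    (G : SimpleGraph (Fin N ⊕ Fin m))
    (hG : ∀ u v, G.Adj u v ↔ u ≠ v ∧
      (Sum.elim (fun i => φ i '' K) C u ∩ Sum.elim (fun i => φ i '' K) C v).Nonempty)
    (hGconn : G.Connected) :
    IsConnected K := by
  obtain ⟨r, hr, hφ⟩ := exists_lipschitzWith_lt_one (fun i => (hρ i).2) fun i x y => (hsim i x y).le
  have hG_eq : G = hataGraph φ C K := by ext u v; exact hG u v
  exact ifs_with_condensation_connected_of_hata_graph_connected_general hr
    (fun i => (hφ i).lipschitzOnWith) (fun j => (hCconn j).isPreconnected) hKne hKcomp hK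
    (hG_eq ▸ hGconn.preconnected)
end
end
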